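/- Let R ⊂ A be a Frobenius extension of rings and let M be a left A-module. Then the following three conditions are equivalent: (1) M is a Gorenstein injective left A-module; (2) the underlying left R-module M (via restriction of scalars) is Gorenstein injective; (3) both A ⊗_R M and Hom_R(A, M) are Gorenstein injective left A-modules. -/

import Mathlib

/-! In an abelian category, the Gorenstein injective objects form the largest class of objects which
are right `Ext`-orthogonal to the injectives and are quotients of injectives by objects of the
class. This description makes the class visibly functorial: an exact right adjoint whose left
adjoint preserves monomorphisms and injectives also preserves Gorenstein injectives.

For a Frobenius extension, restriction `F` has coextension `G = Hom_R(A, -)` as a left and a right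
adjoint, so `F` and `G` both preserve Gorenstein injectives. Conversely, suppose that `F Y` is
Gorenstein injective and transpose a cover `0 ⟶ K ⟶ I ⟶ F Y ⟶ 0` to a map `G I ⟶ Y`. It is epi, and
after applying `F` every map from an injective lifts along it, which is what is needed for the
kernel to restrict to a Gorenstein injective again. So the objects with Gorenstein injective
restriction are quotients of injectives by such objects, and hence Gorenstein injective.
Finally `A ⊗_R M ≅ Hom_R(A, M)`, and `F Y` is a retract of `F G F Y`. -/

universe u

section Frobenius

variable {R A : Type u} [Ring R] [Ring A]

/-- A ring extension `ι : R →+* A` (an injective ring homomorphism) is a Frobenius extension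
if there is an `R`-`R`-bimodule homomorphism `τ : A → R` together with dual bases
`x i`, `y i` in `A`. -/
def IsFrobeniusExtension (ι : R →+* A) : Prop :=
  Function.Injective ι ∧
  ∃ (τ : A →+ R) (n : ℕ) (x y : Fin n → A),
    (∀ (r : R) (a : A), τ (ι r * a) = r * τ a) ∧
    (∀ (a : A) (r : R), τ (a * ι r) = τ a * r) ∧
    (∀ a : A, ∑ i, x i * ι (τ (y i * a)) = a) ∧
    (∀ a : A, ∑ i, ι (τ (a * x i)) * y i = a)

/-- The extension of scalars `A ⊗_R N` of a left `R`-module `N` along `ι : R →+* A`,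
realized as the quotient of the free left `A`-module on `N` by the bilinearity and
balancing relations.  It is a left `A`-module. -/
abbrev ExtendedTensor (ι : R →+* A) (N : Type u) [AddCommGroup N] [Module R N] : Type u :=
  (N →₀ A) ⧸ Submodule.span A
    ({x : N →₀ A | ∃ n n' : N,
        x = Finsupp.single (n + n') 1 - Finsupp.single n 1 - Finsupp.single n' 1} ∪
     {x : N →₀ A | ∃ (r : R) (n : N),
        x = Finsupp.single (r • n) 1 - Finsupp.single n (ι r)})

/-- The coinduced module `Hom_R(A, N)` of a left `R`-module `N` along `ι : R →+* A`,
where `A` is a left `R`-module via `ι`.  It is a left `A`-module via `(a • f) b = f (b * a)`. -/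
abbrev CoinducedModule (ι : R →+* A) (N : Type u) [AddCommGroup N] [Module R N] : Type u :=
  @LinearMap R R _ _ (RingHom.id R) A N _ _ (Module.compHom A ι) _

noncomputable instance CoinducedModule.instModule (ι : R →+* A) (N : Type u)
    [AddCommGroup N] [Module R N] : Module A (CoinducedModule ι N) :=
  letI : Module R A := Module.compHom A ι
  { smul := fun a f =>
      { toFun := fun b => f (b * a)
        map_add' := fun b c => by
          show f ((b + c) * a) = f (b * a) + f (c * a)
          rw [add_mul]; exact map_add f _ _
        map_smul' := fun r b => by
          show f (ι r * b * a) = r • f (b * a)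
          rw [mul_assoc]
          exact map_smul f r (b * a) }
    one_smul := fun f => LinearMap.ext fun b => by show f (b * 1) = f b; rw [mul_one]
    mul_smul := fun a a' f => LinearMap.ext fun b => by
      show f (b * (a * a')) = f (b * a * a')
      rw [mul_assoc]
    smul_zero := fun a => LinearMap.ext fun b => rfl
    smul_add := fun a f g => LinearMap.ext fun b => rfl
    add_smul := fun a a' f => LinearMap.ext fun b => by
      show f (b * (a + a')) = f (b * a) + f (b * a')
      rw [mul_add, map_add]
    zero_smul := fun f => LinearMap.ext fun b => by show f (b * 0) = 0; rw [mul_zero, map_zero] }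

end Frobenius

/-- A left `R`-module `M` is Gorenstein injective if it is a cosyzygy of a totally acyclic
complex of injective modules: there is an acyclic complex `⋯ → I₁ → I₀ → I₋₁ → ⋯` of
injective `R`-modules which stays acyclic after applying `Hom_R(Q, -)` for every
injective `R`-module `Q`, with `M ≅ ker (I₀ → I₋₁)`. -/
def IsGorensteinInjective (R : Type u) [Ring R] (M : ModuleCat.{u} R) : Prop :=
  ∃ (I : ℤ → ModuleCat.{u} R) (f : ∀ i : ℤ, I (i + 1) →ₗ[R] I i),
    (∀ i, Module.Injective R (I i)) ∧
    (∀ i, (f i).comp (f (i + 1)) = 0) ∧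
    (∀ i, LinearMap.range (f (i + 1)) = LinearMap.ker (f i)) ∧
    (∀ Q : ModuleCat.{u} R, Module.Injective R Q →
      ∀ (i : ℤ) (g : Q →ₗ[R] I (i + 1)), (f i).comp g = 0 →
        ∃ h : Q →ₗ[R] I (i + 1 + 1), (f (i + 1)).comp h = g) ∧
    Nonempty (↥M ≃ₗ[R] ↥(LinearMap.ker (f (-1))))

universe w w' v₁ v₂ u₁ u₂

section ExtDimensionShift

open CategoryTheory Abelian

variable {C : Type u₁} [Category.{v₁} C] [Abelian C] [HasExt.{w} C]
  {S : ShortComplex C} {Q : C}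

theorem subsingleton_ext_one_X₁_iff (hS : S.ShortExact) [Subsingleton (Ext Q S.X₂ 1)] :
    Subsingleton (Ext Q S.X₁ 1) ↔ ∀ t : Q ⟶ S.X₃, ∃ s : Q ⟶ S.X₂, s ≫ S.g = t := by
  constructor
  · intro _ t
    obtain ⟨s, hs⟩ := Ext.covariant_sequence_exact₃ Q hS (Ext.mk₀ t) rfl (Subsingleton.elim _ _)
    obtain ⟨s, rfl⟩ := (Ext.mk₀_bijective _ _).surjective s
    exact ⟨s, (Ext.mk₀_bijective _ _).injective (by rw [← hs, Ext.mk₀_comp_mk₀])⟩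
  · refine fun lift => subsingleton_of_forall_eq 0 fun x => ?_
    obtain ⟨t, rfl⟩ := Ext.covariant_sequence_exact₁ Q hS x (Subsingleton.elim _ _) rfl
    obtain ⟨t, rfl⟩ := (Ext.mk₀_bijective _ _).surjective t
    obtain ⟨s, rfl⟩ := lift t
    rw [← Ext.mk₀_comp_mk₀_assoc, hS.comp_extClass, Ext.comp_zero]

theorem subsingleton_ext_add_two_X₁_iff (hS : S.ShortExact) (n : ℕ)
    [Subsingleton (Ext Q S.X₂ (n + 1))] [Subsingleton (Ext Q S.X₂ (n + 2))] :
    Subsingleton (Ext Q S.X₁ (n + 2)) ↔ Subsingleton (Ext Q S.X₃ (n + 1)) := by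
  constructor <;> refine fun _ => subsingleton_of_forall_eq 0 fun x => ?_
  · obtain ⟨y, rfl⟩ := Ext.covariant_sequence_exact₃ Q hS x rfl (Subsingleton.elim _ _)
    rw [Subsingleton.elim y 0, Ext.zero_comp]
  · obtain ⟨y, rfl⟩ := Ext.covariant_sequence_exact₁ Q hS x (Subsingleton.elim _ _) rfl
    rw [Subsingleton.elim y 0, Ext.zero_comp]

theorem subsingleton_ext_X₂ (hS : S.ShortExact) (n : ℕ) [Subsingleton (Ext Q S.X₁ n)]
    [Subsingleton (Ext Q S.X₃ n)] : Subsingleton (Ext Q S.X₂ n) := by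
  refine subsingleton_of_forall_eq 0 fun x => ?_
  obtain ⟨y, rfl⟩ := Ext.covariant_sequence_exact₂ Q hS x (Subsingleton.elim _ _)
  rw [Subsingleton.elim y 0, Ext.zero_comp]

theorem subsingleton_ext_of_retract {X Y : C} (h : Retract X Y) (n : ℕ)
    [Subsingleton (Ext Q Y n)] : Subsingleton (Ext Q X n) := by
  refine subsingleton_of_forall_eq 0 fun x => ?_
  rw [← x.comp_mk₀_id, ← h.retract, ← Ext.mk₀_comp_mk₀,
    ← Ext.comp_assoc_of_third_deg_zero, Subsingleton.elim (x.comp _ _) 0, Ext.zero_comp]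

theorem subsingleton_ext_of_retract_left {X Y : C} (h : Retract X Y) (n : ℕ)
    [Subsingleton (Ext Y Q n)] : Subsingleton (Ext X Q n) := by
  refine subsingleton_of_forall_eq 0 fun x => ?_
  rw [← x.mk₀_id_comp, ← h.retract, ← Ext.mk₀_comp_mk₀_assoc,
    Subsingleton.elim ((Ext.mk₀ h.r).comp x _) 0, Ext.comp_zero]

end ExtDimensionShift

section ShortExactConstructions

open CategoryTheory Limits

variable {C : Type u₁} [Category.{v₁} C] [Abelian C]

/-- The pullback `0 ⟶ S.X₁ ⟶ S.X₂ ×[S.X₃] T ⟶ T ⟶ 0` of a short complex `S` along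
`t : T ⟶ S.X₃`. -/
noncomputable abbrev pullbackShortComplex (S : ShortComplex C) {T : C} (t : T ⟶ S.X₃) :
    ShortComplex C :=
  .mk (pullback.lift S.f 0 (by rw [S.zero, zero_comp]) : S.X₁ ⟶ pullback S.g t)
    (pullback.snd S.g t) (pullback.lift_snd _ _ _)

theorem shortExact_pullbackShortComplex {S : ShortComplex C} (hS : S.ShortExact) {T : C}
    (t : T ⟶ S.X₃) : (pullbackShortComplex S t).ShortExact := by
  have := hS.epi_g
  have := hS.mono_f
  have : Mono (pullbackShortComplex S t).f := mono_of_mono_fac (pullback.lift_fst S.f 0 _)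
  refine ⟨ShortComplex.exact_of_f_is_kernel _ ?_⟩
  refine KernelFork.IsLimit.ofι' _ _ fun k hk => ?_
  have hk₀ : (k ≫ pullback.fst S.g t) ≫ S.g = 0 := by
    rw [Category.assoc, pullback.condition, reassoc_of% hk, zero_comp]
  refine ⟨hS.exact.lift _ hk₀, pullback.hom_ext ?_ ?_⟩
  · rw [Category.assoc, pullback.lift_fst, hS.exact.lift_f]
  · rw [Category.assoc, pullback.lift_snd, comp_zero]
    exact hk.symm

theorem shortExact_kernel {S₁ S₂ : ShortComplex C} (φ : S₁ ⟶ S₂) (h₁ : S₁.ShortExact)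
    (h₂ : S₂.ShortExact) [Epi φ.τ₁] : (kernel φ).ShortExact := by
  let snake : ShortComplex.SnakeInput C :=
    { L₀ := kernel φ
      L₁ := S₁
      L₂ := S₂
      L₃ := cokernel φ
      v₀₁ := kernel.ι φ
      v₁₂ := φ
      v₂₃ := cokernel.π φ
      h₀ := kernelIsKernel φ
      h₃ := cokernelIsCokernel φ
      L₁_exact := h₁.exact
      epi_L₁_g := h₁.epi_g
      L₂_exact := h₂.exact
      mono_L₂_f := h₂.mono_f }
  have : Mono snake.L₁.f := h₁.mono_f
  have := snake.epi_v₂₃_τ₁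
  have δ_eq_zero : snake.δ = 0 :=
    (IsZero.of_epi_eq_zero snake.v₂₃.τ₁ (snake.exact_C₁_down.epi_f_iff.1 ‹_›)).eq_of_tgt _ _
  exact .mk' snake.L₀_exact snake.mono_L₀_f (snake.L₁'_exact.epi_f δ_eq_zero)

theorem exists_shortExact_kernel_biprod_desc {S : ShortComplex C} (hS : S.ShortExact)
    {I₁ I₃ : C} (p₁ : I₁ ⟶ S.X₁) (s : I₃ ⟶ S.X₂) [Epi p₁] [Epi (s ≫ S.g)] :
    ∃ (T : ShortComplex C) (i : T.X₂ ⟶ I₁ ⊞ I₃) (p : I₁ ⊞ I₃ ⟶ S.X₂) (zero : i ≫ p = 0),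
      T.ShortExact ∧ (ShortComplex.mk i p zero).ShortExact ∧
      Nonempty (T.X₁ ≅ kernel p₁) ∧ Nonempty (T.X₃ ≅ kernel (s ≫ S.g)) := by
  let B : ShortComplex C := .mk (biprod.inl : I₁ ⟶ I₁ ⊞ I₃) biprod.snd (by simp)
  have hB : B.ShortExact := (ShortComplex.Splitting.ofHasBinaryBiproduct I₁ I₃).shortExact
  let φ : B ⟶ S :=
    { τ₁ := p₁
      τ₂ := biprod.desc (p₁ ≫ S.f) s
      τ₃ := s ≫ S.g
      comm₁₂ := by simp [B]
      comm₂₃ := by ext <;> simp [B] }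
  have : Epi φ.τ₁ := ‹Epi p₁›
  have : Epi φ.τ₃ := ‹Epi (s ≫ S.g)›
  have := hS.epi_g
  have : Epi φ.τ₂ := ShortComplex.epi_τ₂_of_exact_of_epi φ hS.exact
  have : Mono (kernel.ι φ).τ₂ := inferInstanceAs (Mono (ShortComplex.π₂.map (kernel.ι φ)))
  have zero : (kernel.ι φ).τ₂ ≫ φ.τ₂ = 0 := by
    rw [← ShortComplex.comp_τ₂, kernel.condition, ShortComplex.zero_τ₂]
  have exact₂ : (ShortComplex.mk (kernel.ι φ).τ₂ φ.τ₂ zero).Exact :=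
    ShortComplex.exact_of_f_is_kernel _
      (isLimitForkMapOfIsLimit' ShortComplex.π₂ (kernel.condition φ) (kernelIsKernel φ))
  exact ⟨kernel φ, _, _, zero, shortExact_kernel φ hB hS, ⟨exact₂⟩,
    ⟨PreservesKernel.iso ShortComplex.π₁ φ⟩, ⟨PreservesKernel.iso ShortComplex.π₃ φ⟩⟩

theorem shortExact_kernel_ι {X Y : C} (g : X ⟶ Y) [Epi g] :
    (ShortComplex.mk (kernel.ι g) g (kernel.condition g)).ShortExact :=
  ⟨ShortComplex.exact_kernel g⟩

theorem exists_shortExact_injective_X₂ [EnoughInjectives C] (Y : C) :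
    ∃ S : ShortComplex C, S.ShortExact ∧ Injective S.X₂ ∧ S.X₁ = Y :=
  ⟨.mk (Injective.ι Y) (cokernel.π _) (cokernel.condition _), ⟨ShortComplex.exact_cokernel _⟩,
    inferInstanceAs (Injective (Injective.under Y)), rfl⟩

theorem nonempty_retract_kernel_comp {X Y Z : C} (h : Retract Z Y) (g : X ⟶ Y) :
    Nonempty (Retract (kernel (g ≫ h.r)) (pullback g (𝟙 Y - h.r ≫ h.i))) := by
  have lift_comm :
      kernel.ι (g ≫ h.r) ≫ g = (kernel.ι (g ≫ h.r) ≫ g) ≫ (𝟙 Y - h.r ≫ h.i) := by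
    rw [Preadditive.comp_sub, Category.comp_id, Category.assoc, ← Category.assoc g,
      kernel.condition_assoc, zero_comp, sub_zero]
  have fst_comp : pullback.fst g (𝟙 Y - h.r ≫ h.i) ≫ g ≫ h.r = 0 := by
    simp [pullback.condition_assoc]
  exact ⟨{
    i := pullback.lift (kernel.ι _) (kernel.ι _ ≫ g) lift_comm
    r := kernel.lift _ _ fst_comp
    retract := by
      rw [← cancel_mono (kernel.ι (g ≫ h.r)), Category.assoc, kernel.lift_ι, pullback.lift_fst,
        Category.id_comp] }⟩

end ShortExactConstructions

section GorensteinInjectives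

open CategoryTheory Limits Abelian

section InjectiveQuotients

variable {C : Type u₁} [Category.{v₁} C] [HasZeroMorphisms C]

/-- The objects `Y` which admit a short exact sequence `0 ⟶ K ⟶ I ⟶ Y ⟶ 0` with `I` injective
and `P K`. -/
def injectiveQuotients (P : ObjectProperty C) : ObjectProperty C :=
  fun Y => ∃ (K I : C) (f : K ⟶ I) (g : I ⟶ Y) (zero : f ≫ g = 0),
    (ShortComplex.mk f g zero).ShortExact ∧ Injective I ∧ P K

theorem injectiveQuotients_mono : Monotone (injectiveQuotients (C := C)) :=
  fun _ _ h _ ⟨K, I, f, g, zero, hS, hI, hK⟩ => ⟨K, I, f, g, zero, hS, hI, h K hK⟩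

instance (P : ObjectProperty C) : (injectiveQuotients P).IsClosedUnderIsomorphisms where
  of_iso := by
    rintro X Y e ⟨K, I, f, g, zero, hS, hI, hK⟩
    have zero' : f ≫ g ≫ e.hom = 0 := by rw [reassoc_of% zero, zero_comp]
    let iso : ShortComplex.mk f g zero ≅ .mk f (g ≫ e.hom) zero' :=
      ShortComplex.isoMk (Iso.refl _) (Iso.refl _) e
    exact ⟨K, I, f, g ≫ e.hom, zero', ShortComplex.shortExact_of_iso iso hS, hI, hK⟩

end InjectiveQuotients

variable (C : Type u₁) [Category.{v₁} C] [Abelian C] [HasExt.{w} C]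

/-- The objects `Y` such that `Ext^n(Q, Y) = 0` for all injective objects `Q` and all `n > 0`. -/
def injectiveOrthogonal : ObjectProperty C :=
  fun Y => ∀ (Q : C) [Injective Q] (n : ℕ), Subsingleton (Ext.{w} Q Y (n + 1))

instance : (injectiveOrthogonal.{w} C).IsStableUnderRetracts where
  of_retract h hY Q _ n := have := hY Q n; subsingleton_ext_of_retract h (n + 1)

instance : (injectiveOrthogonal.{w} C).IsClosedUnderExtensions where
  prop_X₂_of_shortExact hS h₁ h₃ Q _ n :=
    have := h₁ Q n
    have := h₃ Q n
    subsingleton_ext_X₂ hS (n + 1)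

/-- The Gorenstein injective objects of an abelian category: the largest class of objects that
are orthogonal to the injectives and are quotients of injectives by objects of the class. Since
orthogonality is required in all degrees, only the left half of a totally acyclic complex has to
be recorded; its right half can be any injective resolution. -/
def gorensteinInjectives : ObjectProperty C :=
  OrderHom.gfp ⟨fun P => injectiveOrthogonal.{w} C ⊓ injectiveQuotients P,
    fun _ _ h => inf_le_inf_left _ (injectiveQuotients_mono h)⟩

variable {C}

theorem injectiveOrthogonal_of_injective (I : C) [Injective I] : injectiveOrthogonal.{w} C I :=
  fun Q _ n => Ext.subsingleton_of_injective Q I n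

theorem injectiveOrthogonal_X₁_iff {S : ShortComplex C} (hS : S.ShortExact)
    (h₂ : injectiveOrthogonal.{w} C S.X₂) :
    injectiveOrthogonal.{w} C S.X₁ ↔
      (∀ (Q : C) [Injective Q] (t : Q ⟶ S.X₃), ∃ s : Q ⟶ S.X₂, s ≫ S.g = t) ∧
        injectiveOrthogonal.{w} C S.X₃ := by
  constructor
  · refine fun h₁ => ⟨fun Q _ => ?_, fun Q _ n => ?_⟩ <;>
      have := h₂ Q
    · exact (subsingleton_ext_one_X₁_iff hS).1 (h₁ Q 0)
    · exact (subsingleton_ext_add_two_X₁_iff hS n).1 (h₁ Q (n + 1))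
  · rintro ⟨lift, h₃⟩ Q _ n
    have := h₂ Q
    obtain _ | n := n
    · exact (subsingleton_ext_one_X₁_iff hS).2 (lift Q)
    · exact (subsingleton_ext_add_two_X₁_iff hS n).2 (h₃ Q n)

theorem gorensteinInjectives_eq :
    gorensteinInjectives.{w} C =
      injectiveOrthogonal.{w} C ⊓ injectiveQuotients (gorensteinInjectives.{w} C) :=
  (OrderHom.map_gfp _).symm

theorem gorensteinInjectives_le_injectiveOrthogonal :
    gorensteinInjectives.{w} C ≤ injectiveOrthogonal.{w} C :=
  gorensteinInjectives_eq.trans_le inf_le_left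

theorem gorensteinInjectives_le_injectiveQuotients :
    gorensteinInjectives.{w} C ≤ injectiveQuotients (gorensteinInjectives.{w} C) :=
  gorensteinInjectives_eq.trans_le inf_le_right

theorem le_gorensteinInjectives {P : ObjectProperty C} (h : P ≤ injectiveOrthogonal.{w} C)
    (h' : P ≤ injectiveQuotients P) : P ≤ gorensteinInjectives.{w} C :=
  OrderHom.le_gfp _ (le_inf h h')

instance : (gorensteinInjectives.{w} C).IsClosedUnderIsomorphisms := by
  rw [gorensteinInjectives_eq]
  infer_instance

theorem gorensteinInjectives_of_injective (I : C) [Injective I] :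
    gorensteinInjectives.{w} C I := by
  refine le_gorensteinInjectives (P := Injective) (fun J _ => ?_) (fun J _ => ?_) I ‹_›
  · exact injectiveOrthogonal_of_injective J
  · exact ⟨_, J, _, 𝟙 J, _, shortExact_kernel_ι (𝟙 J), ‹_›,
      Injective.of_iso (isZero_kernel_of_mono (𝟙 J)).isoZero.symm inferInstance⟩

theorem gorensteinInjectives_X₃ {S : ShortComplex C} (hS : S.ShortExact)
    (h₁ : gorensteinInjectives.{w} C S.X₁) [Injective S.X₂] :
    gorensteinInjectives.{w} C S.X₃ := by
  rw [gorensteinInjectives_eq]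
  exact ⟨((injectiveOrthogonal_X₁_iff hS (injectiveOrthogonal_of_injective _)).1
    (gorensteinInjectives_le_injectiveOrthogonal _ h₁)).2,
    _, _, S.f, S.g, S.zero, hS, ‹_›, h₁⟩

instance : (gorensteinInjectives.{w} C).IsClosedUnderExtensions where
  prop_X₂_of_shortExact {S} hS h₁ h₃ := by
    let P : ObjectProperty C := fun Y => ∃ T : ShortComplex C, T.ShortExact ∧
      gorensteinInjectives.{w} C T.X₁ ∧ gorensteinInjectives.{w} C T.X₃ ∧ T.X₂ = Y
    refine le_gorensteinInjectives (P := P) ?_ ?_ _ ⟨S, hS, h₁, h₃, rfl⟩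
    · rintro _ ⟨T, hT, h₁, h₃, rfl⟩
      exact (injectiveOrthogonal.{w} C).prop_X₂_of_shortExact hT
        (gorensteinInjectives_le_injectiveOrthogonal _ h₁)
        (gorensteinInjectives_le_injectiveOrthogonal _ h₃)
    · rintro _ ⟨T, hT, h₁, h₃, rfl⟩
      have orth₁ := gorensteinInjectives_le_injectiveOrthogonal _ h₁
      have orth₃ := gorensteinInjectives_le_injectiveOrthogonal _ h₃
      have orth₂ := (injectiveOrthogonal.{w} C).prop_X₂_of_shortExact hT orth₁ orth₃
      obtain ⟨K₁, I₁, f₁, g₁, zero₁, hK₁, hI₁, gK₁⟩ :=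
        gorensteinInjectives_le_injectiveQuotients _ h₁
      obtain ⟨K₃, I₃, f₃, g₃, zero₃, hK₃, hI₃, gK₃⟩ :=
        gorensteinInjectives_le_injectiveQuotients _ h₃
      obtain ⟨s, rfl⟩ := ((injectiveOrthogonal_X₁_iff hT orth₂).1 orth₁).1 I₃ g₃
      have := hK₁.epi_g
      have := hK₃.epi_g
      obtain ⟨U, i, p, zero, hU, hp, ⟨e₁⟩, ⟨e₃⟩⟩ := exists_shortExact_kernel_biprod_desc hT g₁ s
      refine ⟨U.X₂, I₁ ⊞ I₃, i, p, zero, hp, inferInstance, U, hU, ?_, ?_, rfl⟩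
      · exact (gorensteinInjectives.{w} C).prop_of_iso
          (hK₁.fIsKernel.conePointUniqueUpToIso (kernelIsKernel g₁) ≪≫ e₁.symm) gK₁
      · exact (gorensteinInjectives.{w} C).prop_of_iso
          (hK₃.fIsKernel.conePointUniqueUpToIso (kernelIsKernel _) ≪≫ e₃.symm) gK₃

instance : (gorensteinInjectives.{w} C).IsStableUnderRetracts where
  of_retract {X Y} h hY := by
    let P : ObjectProperty C := (gorensteinInjectives.{w} C).retractClosure
    refine le_gorensteinInjectives (P := P) ?_ ?_ _ ⟨Y, hY, ⟨h⟩⟩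
    · rintro M ⟨N, hN, ⟨h⟩⟩
      exact (injectiveOrthogonal.{w} C).prop_of_retract h
        (gorensteinInjectives_le_injectiveOrthogonal _ hN)
    · rintro M ⟨N, hN, ⟨h⟩⟩
      obtain ⟨K, I, f, g, zero, hK, hI, gK⟩ := gorensteinInjectives_le_injectiveQuotients _ hN
      have := hK.epi_g
      let T := pullbackShortComplex (.mk f g zero) (𝟙 N - h.r ≫ h.i)
      have gT : gorensteinInjectives.{w} C T.X₂ :=
        (gorensteinInjectives.{w} C).prop_X₂_of_shortExact
          (shortExact_pullbackShortComplex hK (𝟙 N - h.r ≫ h.i)) gK hN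
      exact ⟨_, I, _, _, _, shortExact_kernel_ι (g ≫ h.r), hI, T.X₂, gT,
        nonempty_retract_kernel_comp h g⟩

theorem gorensteinInjectives_X₁ {S : ShortComplex C} (hS : S.ShortExact)
    (h₂ : gorensteinInjectives.{w} C S.X₂) (h₃ : gorensteinInjectives.{w} C S.X₃)
    (lift : ∀ (Q : C) [Injective Q] (t : Q ⟶ S.X₃), ∃ s : Q ⟶ S.X₂, s ≫ S.g = t) :
    gorensteinInjectives.{w} C S.X₁ := by
  obtain ⟨K, I, f, g, zero, hK, hI, gK⟩ := gorensteinInjectives_le_injectiveQuotients _ h₃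
  obtain ⟨s, hs⟩ := lift I g
  have hT := shortExact_pullbackShortComplex hK S.g
  have gT : gorensteinInjectives.{w} C (pullback g S.g) :=
    (gorensteinInjectives.{w} C).prop_X₂_of_shortExact hT gK h₂
  have := hS.mono_f
  have zero : (pullback.snd g S.g - pullback.fst g S.g ≫ s) ≫ S.g = 0 := by
    rw [Preadditive.sub_comp, Category.assoc, hs, pullback.condition, sub_self]
  exact (gorensteinInjectives.{w} C).prop_of_retract
    { i := pullback.lift 0 S.f (by simp)
      r := hS.exact.lift _ zero
      retract := by simp [← cancel_mono S.f, pullback.lift_fst_assoc, pullback.lift_snd] } gT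

end GorensteinInjectives

section AdjointFunctors

open CategoryTheory Limits Abelian

variable {C : Type u₁} [Category.{v₁} C] {D : Type u₂} [Category.{v₂} D]

theorem forall_exists_comp_map_iff_of_adjunction {L : C ⥤ D} {R : D ⥤ C} (adj : L ⊣ R) {Q : C}
    {X Y : D} (g : X ⟶ Y) :
    (∀ t : Q ⟶ R.obj Y, ∃ s, s ≫ R.map g = t) ↔ ∀ t : L.obj Q ⟶ Y, ∃ s, s ≫ g = t := by
  simp only [(adj.homEquiv Q _).surjective.forall, (adj.homEquiv Q _).surjective.exists,
    ← adj.homEquiv_naturality_right, (adj.homEquiv Q _).injective.eq_iff]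

variable [Abelian C] [Abelian D] [HasExt.{w} C] [HasExt.{w'} D]

theorem subsingleton_ext_obj_iff_of_adjunction [EnoughInjectives D] {L : C ⥤ D} {R : D ⥤ C}
    (adj : L ⊣ R) [L.PreservesMonomorphisms] [PreservesFiniteColimits R] (Q : C) (Y : D) (n : ℕ) :
    Subsingleton (Ext.{w} Q (R.obj Y) (n + 1)) ↔
      Subsingleton (Ext.{w'} (L.obj Q) Y (n + 1)) := by
  have := adj.isRightAdjoint
  have := Functor.preservesInjectiveObjects_of_adjunction_of_preservesMonomorphisms adj
  induction n generalizing Y with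
  | zero =>
    obtain ⟨S, hS, _, rfl⟩ := exists_shortExact_injective_X₂ Y
    have : Subsingleton (Ext Q (S.map R).X₂ 1) :=
      Ext.subsingleton_of_injective Q (R.obj S.X₂) 0
    have := Ext.subsingleton_of_injective (L.obj Q) S.X₂ 0
    rw [subsingleton_ext_one_X₁_iff hS, ← forall_exists_comp_map_iff_of_adjunction adj]
    exact subsingleton_ext_one_X₁_iff (hS.map_of_exact R)
  | succ n ih =>
    obtain ⟨S, hS, _, rfl⟩ := exists_shortExact_injective_X₂ Y
    have (k : ℕ) : Subsingleton (Ext Q (S.map R).X₂ (k + 1)) :=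
      Ext.subsingleton_of_injective Q (R.obj S.X₂) k
    have := Ext.subsingleton_of_injective (L.obj Q) S.X₂
    exact (subsingleton_ext_add_two_X₁_iff (hS.map_of_exact R) n).trans
      ((ih S.X₃).trans (subsingleton_ext_add_two_X₁_iff hS n).symm)

theorem gorensteinInjectives_obj_of_adjunction [EnoughInjectives D] {L : C ⥤ D} {R : D ⥤ C}
    (adj : L ⊣ R) [L.PreservesMonomorphisms] [L.PreservesInjectiveObjects]
    [PreservesFiniteColimits R] {Y : D} (hY : gorensteinInjectives.{w'} D Y) :
    gorensteinInjectives.{w} C (R.obj Y) := by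
  have := adj.isRightAdjoint
  have := Functor.preservesInjectiveObjects_of_adjunction_of_preservesMonomorphisms adj
  let P : ObjectProperty C := fun X => ∃ Y, gorensteinInjectives.{w'} D Y ∧ R.obj Y = X
  refine le_gorensteinInjectives (P := P) ?_ ?_ _ ⟨Y, hY, rfl⟩
  · rintro _ ⟨Y, hY, rfl⟩ Q _ n
    rw [subsingleton_ext_obj_iff_of_adjunction adj]
    exact gorensteinInjectives_le_injectiveOrthogonal _ hY _ n
  · rintro _ ⟨Y, hY, rfl⟩
    obtain ⟨K, I, f, g, zero, hS, _, hK⟩ := gorensteinInjectives_le_injectiveQuotients _ hY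
    exact ⟨R.obj K, R.obj I, R.map f, R.map g, _, hS.map_of_exact R, inferInstance, K, hK, rfl⟩

section FrobeniusPair

variable {F : D ⥤ C} {G : C ⥤ D} (adj₁ : F ⊣ G) (adj₂ : G ⊣ F)

include adj₁ adj₂

theorem gorensteinInjectives_obj_of_adjunctions [EnoughInjectives D] {Y : D}
    (hY : gorensteinInjectives.{w'} D Y) : gorensteinInjectives.{w} C (F.obj Y) := by
  have := adj₁.isLeftAdjoint
  have := adj₁.isRightAdjoint
  have := adj₂.isRightAdjoint
  have := Functor.preservesInjectiveObjects_of_adjunction_of_preservesMonomorphisms adj₁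
  exact gorensteinInjectives_obj_of_adjunction adj₂ hY

theorem injectiveOrthogonal_of_obj [EnoughInjectives D] [F.Faithful] {Y : D}
    (hY : injectiveOrthogonal.{w} C (F.obj Y)) : injectiveOrthogonal.{w'} D Y := by
  have := adj₁.isLeftAdjoint
  have := adj₁.isRightAdjoint
  have := adj₂.isLeftAdjoint
  have := adj₂.isRightAdjoint
  have := Functor.preservesInjectiveObjects_of_adjunction_of_preservesMonomorphisms adj₂
  intro Q _ n
  -- By faithfulness the injective object `Q` is a retract of `G.obj (F.obj Q)`.
  let h : Retract Q (G.obj (F.obj Q)) :=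
    { i := adj₁.unit.app Q
      r := Injective.factorThru (𝟙 Q) (adj₁.unit.app Q) }
  have : Subsingleton (Ext.{w'} (G.obj (F.obj Q)) Y (n + 1)) := by
    rw [← subsingleton_ext_obj_iff_of_adjunction adj₂]
    exact hY (F.obj Q) n
  exact subsingleton_ext_of_retract_left h (n + 1)

theorem gorensteinInjectives_of_obj [EnoughInjectives D] [F.Faithful] {Y : D}
    (hY : gorensteinInjectives.{w} C (F.obj Y)) : gorensteinInjectives.{w'} D Y := by
  have := adj₁.isLeftAdjoint
  have := adj₁.isRightAdjoint
  have := adj₂.isRightAdjoint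
  have := Functor.preservesInjectiveObjects_of_adjunction_of_preservesMonomorphisms adj₁
  have := Functor.preservesInjectiveObjects_of_adjunction_of_preservesMonomorphisms adj₂
  let P : ObjectProperty D := fun Y => gorensteinInjectives.{w} C (F.obj Y)
  refine le_gorensteinInjectives (P := P) (fun Y hY => ?_) (fun Y hY => ?_) _ hY
  · exact injectiveOrthogonal_of_obj adj₁ adj₂
      (gorensteinInjectives_le_injectiveOrthogonal _ hY)
  · obtain ⟨K, I, f, g, zero, hS, _, hK⟩ := gorensteinInjectives_le_injectiveQuotients _ hY
    have := hS.epi_g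
    -- The transpose `G.obj I ⟶ Y` of `g`, through whose image under `F` the map `g` factors.
    let p : G.obj I ⟶ Y := (adj₂.homEquiv I Y).symm g
    have fac : adj₂.unit.app I ≫ F.map p = g :=
      (adj₂.homEquiv_unit I Y p).symm.trans ((adj₂.homEquiv I Y).apply_symm_apply g)
    have : Epi (F.map p) := epi_of_epi_fac fac
    have : Epi p := F.epi_of_epi_map this
    have hp := shortExact_kernel_ι p
    have lift (Q : C) [Injective Q] (t : Q ⟶ F.obj Y) : ∃ s, s ≫ F.map p = t := by
      obtain ⟨s, hs⟩ := ((injectiveOrthogonal_X₁_iff hS (injectiveOrthogonal_of_injective I)).1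
        (gorensteinInjectives_le_injectiveOrthogonal _ hK)).1 Q t
      exact ⟨s ≫ adj₂.unit.app I, by rw [Category.assoc, fac, hs]⟩
    exact ⟨_, _, _, _, _, hp, inferInstance, gorensteinInjectives_X₁ (hp.map_of_exact F)
      (gorensteinInjectives_of_injective (F.obj (G.obj I))) hY lift⟩

theorem gorensteinInjectives_obj_obj_iff [EnoughInjectives C] [EnoughInjectives D] {Y : D} :
    gorensteinInjectives.{w'} D (G.obj (F.obj Y)) ↔ gorensteinInjectives.{w} C (F.obj Y) := by
  refine ⟨fun h => ?_, gorensteinInjectives_obj_of_adjunctions adj₂ adj₁⟩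
  exact (gorensteinInjectives.{w} C).prop_of_retract
    { i := F.map (adj₁.unit.app Y)
      r := adj₁.counit.app (F.obj Y) }
    (gorensteinInjectives_obj_of_adjunctions adj₁ adj₂ h)

end FrobeniusPair
end AdjointFunctors

section TotallyAcyclic

open CategoryTheory Abelian

theorem exists_int_chain {α : Type*} {r : α → α → Prop} (hr : Relator.BiTotal r) (a : α) :
    ∃ s : ℤ → α, s 0 = a ∧ ∀ i, r (s i) (s (i + 1)) := by
  choose next h_next using hr.left
  choose prev h_prev using hr.right
  refine ⟨fun i => i.rec (fun n => next^[n] a) (fun n => prev^[n + 1] a), rfl, ?_⟩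
  rintro (n | _ | n)
  · change r _ (next^[n + 1] a)
    rw [Function.iterate_succ_apply']
    exact h_next _
  · exact h_prev a
  · change r (prev^[n + 2] a) _
    rw [Function.iterate_succ_apply']
    exact h_prev _

variable {C : Type u₁} [Category.{v₁} C] [Abelian C]

/-- A totally acyclic complex `⋯ ⟶ I₁ ⟶ I₀ ⟶ I₋₁ ⟶ ⋯` of injective objects, encoded by the short
exact sequences `S i : 0 ⟶ Zᵢ₊₁ ⟶ Iᵢ₊₁ ⟶ Zᵢ ⟶ 0` which it is spliced from: since each `S i` is
only given up to isomorphism, consecutive ones are linked by an isomorphism. -/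
structure IsTotallyAcyclic (S : ℤ → ShortComplex C) : Prop where
  shortExact (i : ℤ) : (S i).ShortExact
  injective_X₂ (i : ℤ) : Injective (S i).X₂
  exists_lift (i : ℤ) (Q : C) [Injective Q] (t : Q ⟶ (S i).X₃) : ∃ s, s ≫ (S i).g = t
  nonempty_iso (i : ℤ) : Nonempty ((S (i + 1)).X₃ ≅ (S i).X₁)

variable [HasExt.{w} C]

theorem IsTotallyAcyclic.injectiveOrthogonal_X₁ {S : ℤ → ShortComplex C}
    (h : IsTotallyAcyclic S) (i : ℤ) : injectiveOrthogonal.{w} C (S i).X₁ := by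
  intro Q _ n
  have (i : ℤ) := h.injective_X₂ i
  have ext_X₂ (i : ℤ) := Ext.subsingleton_of_injective Q (S i).X₂
  induction n generalizing i with
  | zero => exact (subsingleton_ext_one_X₁_iff (h.shortExact i)).2 (h.exists_lift i Q)
  | succ n ih =>
    obtain ⟨j, rfl⟩ : ∃ j, j + 1 = i := ⟨i - 1, sub_add_cancel i 1⟩
    obtain ⟨e⟩ := h.nonempty_iso j
    have := ih j
    exact (subsingleton_ext_add_two_X₁_iff (h.shortExact (j + 1)) n).2
      (subsingleton_ext_of_retract e.retract _)

theorem IsTotallyAcyclic.gorensteinInjectives_X₁ {S : ℤ → ShortComplex C}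
    (h : IsTotallyAcyclic S) (i : ℤ) : gorensteinInjectives.{w} C (S i).X₁ := by
  let P : ObjectProperty C := fun Y => ∃ i, (S i).X₁ = Y
  refine le_gorensteinInjectives (P := P) ?_ ?_ _ ⟨i, rfl⟩
  · rintro _ ⟨i, rfl⟩
    exact h.injectiveOrthogonal_X₁ i
  · rintro _ ⟨i, rfl⟩
    obtain ⟨e⟩ := h.nonempty_iso i
    exact (injectiveQuotients P).prop_of_iso e
      ⟨_, _, _, _, _, h.shortExact (i + 1), h.injective_X₂ (i + 1), i + 1, rfl⟩

theorem exists_isTotallyAcyclic [EnoughInjectives C] {Y : C}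
    (hY : gorensteinInjectives.{w} C Y) :
    ∃ S : ℤ → ShortComplex C, IsTotallyAcyclic S ∧ (S 0).X₁ = Y := by
  let T := { S : ShortComplex C //
    S.ShortExact ∧ Injective S.X₂ ∧ gorensteinInjectives.{w} C S.X₁ }
  let linked (S S' : T) : Prop := Nonempty (S'.1.X₃ ≅ S.1.X₁)
  have biTotal : Relator.BiTotal linked := by
    constructor
    · rintro ⟨S, -, -, h⟩
      obtain ⟨K, I, f, g, zero, hS, hI, hK⟩ := gorensteinInjectives_le_injectiveQuotients _ h
      exact ⟨⟨.mk f g zero, hS, hI, hK⟩, ⟨Iso.refl _⟩⟩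
    · rintro ⟨S, hS, hI, h⟩
      obtain ⟨S', hS', hI', e⟩ := exists_shortExact_injective_X₂ S.X₃
      exact ⟨⟨S', hS', hI', e ▸ gorensteinInjectives_X₃ hS h⟩, ⟨eqToIso e.symm⟩⟩
  obtain ⟨S, hS, hI, rfl⟩ := exists_shortExact_injective_X₂ Y
  obtain ⟨s, hs₀, hs⟩ := exists_int_chain biTotal ⟨S, hS, hI, hY⟩
  refine ⟨fun i => (s i).1, ?_, by simp only [hs₀]⟩
  exact {
    shortExact i := (s i).2.1
    injective_X₂ i := (s i).2.2.1
    exists_lift i :=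
      have := (s i).2.2.1
      ((injectiveOrthogonal_X₁_iff (s i).2.1 (injectiveOrthogonal_of_injective _)).1
        (gorensteinInjectives_le_injectiveOrthogonal _ (s i).2.2.2)).1
    nonempty_iso := hs }

end TotallyAcyclic

section Modules

open CategoryTheory Abelian

variable {R : Type u} [Ring R]

theorem gorensteinInjectives_of_isGorensteinInjective {M : ModuleCat.{u} R}
    (h : IsGorensteinInjective R M) : gorensteinInjectives.{u} (ModuleCat.{u} R) M := by
  obtain ⟨I, f, hI, zero, exact, lift, ⟨e⟩⟩ := h
  let p (i : ℤ) : I (i + 1 + 1) →ₗ[R] LinearMap.ker (f i) :=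
    (f (i + 1)).codRestrict _ (LinearMap.congr_fun (zero i))
  have surjective_p (i : ℤ) : Function.Surjective (p i) := by
    rintro ⟨x, hx⟩
    obtain ⟨y, hy⟩ := (exact i).ge hx
    exact ⟨y, Subtype.ext hy⟩
  have hS : IsTotallyAcyclic fun i => (p i).shortComplexKer :=
    { shortExact i := LinearMap.shortExact_shortComplexKer (surjective_p i)
      injective_X₂ i := (Module.injective_iff_injective_object R _).1 (hI _)
      exists_lift i Q hQ t := by
        obtain ⟨s, hs⟩ := lift Q ((Module.injective_iff_injective_object R Q).2 hQ) i
          ((LinearMap.ker (f i)).subtype.comp t.hom) (by ext x; exact (t.hom x).2)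
        exact ⟨ModuleCat.ofHom s, by ext x; exact LinearMap.congr_fun hs x⟩
      nonempty_iso i :=
        ⟨(LinearEquiv.ofEq _ _ (LinearMap.ker_codRestrict _ _ _).symm).toModuleIso⟩ }
  have := hS.injective_X₂ (-1)
  exact (gorensteinInjectives.{u} (ModuleCat.{u} R)).prop_of_iso e.symm.toModuleIso
    (gorensteinInjectives_X₃ (hS.shortExact (-1)) (hS.gorensteinInjectives_X₁ (-1)))

theorem isGorensteinInjective_of_gorensteinInjectives {M : ModuleCat.{u} R}
    (h : gorensteinInjectives.{u} (ModuleCat.{u} R) M) : IsGorensteinInjective R M := by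
  obtain ⟨S, hS, rfl⟩ := exists_isTotallyAcyclic h
  let e (i : ℤ) := (hS.nonempty_iso i).some
  let d (i : ℤ) : (S (i + 1)).X₂ ⟶ (S i).X₂ := (S (i + 1)).g ≫ (e i).hom ≫ (S i).f
  have mono_f (i : ℤ) : Mono (S i).f := (hS.shortExact i).mono_f
  have epi_g (i : ℤ) : Epi (S i).g := (hS.shortExact i).epi_g
  have injective_ef (i : ℤ) : Function.Injective ((e i).hom ≫ (S i).f) :=
    (ModuleCat.mono_iff_injective _).1 inferInstance
  have surjective_ge (i : ℤ) : Function.Surjective ((S (i + 1)).g ≫ (e i).hom) :=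
    (ModuleCat.epi_iff_surjective _).1 inferInstance
  have ker_d (i : ℤ) : LinearMap.ker (d i).hom = LinearMap.range (S (i + 1)).f.hom := by
    rw [(hS.shortExact (i + 1)).exact.moduleCat_range_eq_ker]
    exact LinearMap.ker_comp_of_ker_eq_bot _ (LinearMap.ker_eq_bot.2 (injective_ef i))
  have range_d (i : ℤ) : LinearMap.range (d i).hom = LinearMap.range (S i).f.hom :=
    LinearMap.range_comp_of_range_eq_top (f := ((S (i + 1)).g ≫ (e i).hom).hom) _
      (LinearMap.range_eq_top.2 (surjective_ge i))
  have exact (i : ℤ) : LinearMap.range (d (i + 1)).hom = LinearMap.ker (d i).hom :=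
    (range_d _).trans (ker_d i).symm
  refine ⟨fun i => (S i).X₂, fun i => (d i).hom, ?_, ?_, exact, ?_, ?_⟩
  · exact fun i => (Module.injective_iff_injective_object R _).2 (hS.injective_X₂ i)
  · exact fun i => LinearMap.range_le_ker_iff.1 (exact i).le
  · intro Q hQ i q hq
    have := (Module.injective_iff_injective_object R Q).1 hQ
    have hq' : ModuleCat.ofHom q ≫ (S (i + 1)).g = 0 := by
      rw [← cancel_mono ((e i).hom ≫ (S i).f), Category.assoc, Limits.zero_comp]
      exact ModuleCat.hom_ext hq
    let k := (hS.shortExact (i + 1)).exact.lift _ hq'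
    obtain ⟨s, hs⟩ := hS.exists_lift (i + 1 + 1) Q (k ≫ (e (i + 1)).inv)
    have hsd : s ≫ d (i + 1) = ModuleCat.ofHom q := by
      rw [reassoc_of% hs, Iso.inv_hom_id_assoc, ShortComplex.Exact.lift_f]
    exact ⟨s.hom, congrArg ModuleCat.Hom.hom hsd⟩
  · have injective_f := (ModuleCat.mono_iff_injective (S (-1 + 1)).f).1 inferInstance
    exact ⟨(LinearEquiv.ofInjective _ injective_f).trans (LinearEquiv.ofEq _ _ (ker_d (-1)).symm)⟩

theorem isGorensteinInjective_iff {M : ModuleCat.{u} R} :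
    IsGorensteinInjective R M ↔ gorensteinInjectives.{u} (ModuleCat.{u} R) M :=
  ⟨gorensteinInjectives_of_isGorensteinInjective, isGorensteinInjective_of_gorensteinInjectives⟩

end Modules

section FrobeniusExtensions

open CategoryTheory

variable {R A : Type u} [Ring R] [Ring A] {ι : R →+* A}
  {N X : Type u} [AddCommGroup N] [Module R N] [AddCommGroup X] [Module A X]

namespace CoinducedModule

@[ext]
theorem ext {φ ψ : CoinducedModule ι N} (h : ∀ a, φ a = ψ a) : φ = ψ :=
  letI := Module.compHom A ι
  LinearMap.ext h

theorem smul_apply (a : A) (φ : CoinducedModule ι N) (b : A) : (a • φ) b = φ (b * a) := rfl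

theorem add_apply (φ ψ : CoinducedModule ι N) (a : A) : (φ + ψ) a = φ a + ψ a := rfl

theorem sum_apply {κ : Type*} (s : Finset κ) (φ : κ → CoinducedModule ι N) (a : A) :
    (∑ i ∈ s, φ i) a = ∑ i ∈ s, φ i a :=
  letI := Module.compHom A ι
  LinearMap.sum_apply s φ a

theorem map_ringHom_mul (φ : CoinducedModule ι N) (r : R) (a : A) : φ (ι r * a) = r • φ a :=
  letI := Module.compHom A ι
  φ.map_smul r a

theorem map_sum {κ : Type*} (φ : CoinducedModule ι N) (s : Finset κ) (a : κ → A) :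
    φ (∑ i ∈ s, a i) = ∑ i ∈ s, φ (a i) :=
  letI := Module.compHom A ι
  _root_.map_sum φ a s

end CoinducedModule

namespace ExtendedTensor

/-- The universal `ι`-semilinear map `m ↦ 1 ⊗ m` from a module to its extension of scalars. -/
noncomputable def mk : N →ₛₗ[ι] ExtendedTensor ι N where
  toFun m := Submodule.Quotient.mk (Finsupp.single m 1)
  map_add' m m' := by
    rw [← Submodule.Quotient.mk_add, Submodule.Quotient.eq, ← sub_sub]
    exact Submodule.subset_span (Or.inl ⟨m, m', rfl⟩)
  map_smul' r m := by
    rw [← Submodule.Quotient.mk_smul, Submodule.Quotient.eq, Finsupp.smul_single, smul_eq_mul,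
      mul_one]
    exact Submodule.subset_span (Or.inr ⟨r, m, rfl⟩)

/-- The `A`-linear extension of an `ι`-semilinear map along `mk`. -/
noncomputable def lift (h : N →ₛₗ[ι] X) : ExtendedTensor ι N →ₗ[A] X :=
  Submodule.liftQ _ (Finsupp.linearCombination A h) <| Submodule.span_le.2 <| by
    rintro _ (⟨m, m', rfl⟩ | ⟨r, m, rfl⟩) <;> simp

theorem lift_mk (h : N →ₛₗ[ι] X) (m : N) : lift h (mk m) = h m :=
  (Finsupp.linearCombination_single A 1 m).trans (one_smul A (h m))

theorem hom_ext {f g : ExtendedTensor ι N →ₗ[A] X} (h : ∀ m : N, f (mk m) = g (mk m)) : f = g :=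
  Submodule.linearMap_qext _ (Finsupp.lhom_ext' fun m => LinearMap.ext_ring (h m))

end ExtendedTensor

/-- A Frobenius system of a ring homomorphism `ι : R →+* A`: an `R`-`R`-bimodule homomorphism
`τ : A → R` together with dual bases `x`, `y`. It is the data which `IsFrobeniusExtension` asserts
to exist, without the injectivity of `ι`. -/
structure FrobeniusSystem (ι : R →+* A) where
  τ : A →+ R
  n : ℕ
  x : Fin n → A
  y : Fin n → A
  map_mul_left (r : R) (a : A) : τ (ι r * a) = r * τ a
  map_mul_right (a : A) (r : R) : τ (a * ι r) = τ a * r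
  sum_x_mul (a : A) : ∑ i, x i * ι (τ (y i * a)) = a
  sum_mul_y (a : A) : ∑ i, ι (τ (a * x i)) * y i = a

namespace FrobeniusSystem

variable (F : FrobeniusSystem ι)

/-- The universal `ι`-semilinear map `m ↦ (b ↦ τ b • m)` which exhibits the coinduced module
as an extension of scalars. -/
def toCoinduced : N →ₛₗ[ι] CoinducedModule ι N :=
  letI := Module.compHom A ι
  { toFun m :=
      { toFun b := F.τ b • m
        map_add' a b := by rw [map_add, add_smul]
        map_smul' r a := (congrArg (· • m) (F.map_mul_left r a)).trans (mul_smul r _ m) }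
    map_add' m m' := LinearMap.ext fun b => smul_add _ _ _
    map_smul' r m := LinearMap.ext fun b =>
      (mul_smul _ r m).symm.trans (congrArg (· • m) (F.map_mul_right b r).symm) }

theorem toCoinduced_apply (m : N) (b : A) : F.toCoinduced m b = F.τ b • m := rfl

theorem sum_smul_toCoinduced (φ : CoinducedModule ι N) :
    ∑ i, F.x i • F.toCoinduced (φ (F.y i)) = φ := by
  ext a
  simp only [CoinducedModule.sum_apply, CoinducedModule.smul_apply, toCoinduced_apply,
    ← CoinducedModule.map_ringHom_mul, ← CoinducedModule.map_sum, F.sum_mul_y]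

theorem apply_mul_eq_sum (φ : CoinducedModule ι N) (a b : A) :
    φ (a * b) = ∑ i, F.τ (a * (b * F.x i)) • φ (F.y i) := by
  simp only [← CoinducedModule.map_ringHom_mul, ← CoinducedModule.map_sum, ← mul_assoc,
    F.sum_mul_y]

theorem sum_smul_smul (a : A) (v : X) : ∑ i, F.x i • ι (F.τ (F.y i * a)) • v = a • v := by
  simp only [← mul_smul, ← Finset.sum_smul, F.sum_x_mul]

/-- The `A`-linear extension of an `ι`-semilinear map along `toCoinduced`. -/
noncomputable def coinducedLift (h : N →ₛₗ[ι] X) : CoinducedModule ι N →ₗ[A] X where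
  toFun φ := ∑ i, F.x i • h (φ (F.y i))
  map_add' φ ψ := by
    simp only [CoinducedModule.add_apply, map_add, smul_add, Finset.sum_add_distrib]
  map_smul' a φ := by
    simp only [CoinducedModule.smul_apply, F.apply_mul_eq_sum φ, map_sum, map_smulₛₗ,
      Finset.smul_sum, RingHom.id_apply]
    rw [Finset.sum_comm]
    simp only [F.sum_smul_smul, mul_smul]

theorem coinducedLift_toCoinduced (h : N →ₛₗ[ι] X) (m : N) :
    F.coinducedLift h (F.toCoinduced m) = h m := by
  change ∑ i, F.x i • h (F.τ (F.y i) • m) = h m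
  simpa only [map_smulₛₗ, mul_one, one_smul] using F.sum_smul_smul 1 (h m)

theorem coinduced_hom_ext {f g : CoinducedModule ι N →ₗ[A] X}
    (h : ∀ m, f (F.toCoinduced m) = g (F.toCoinduced m)) : f = g := by
  ext φ
  rw [← F.sum_smul_toCoinduced φ]
  simp only [map_sum, map_smul, h]

/-- The universal property of `toCoinduced`. -/
noncomputable def coinducedLiftEquiv : (CoinducedModule ι N →ₗ[A] X) ≃ (N →ₛₗ[ι] X) where
  toFun f := f.comp F.toCoinduced
  invFun := F.coinducedLift
  left_inv _ := F.coinduced_hom_ext (F.coinducedLift_toCoinduced _)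
  right_inv h := LinearMap.ext (F.coinducedLift_toCoinduced h)

variable (N) in
/-- Extension and coextension of scalars along a Frobenius extension agree, since both have the
universal property of the extension of scalars. -/
noncomputable def extendedTensorEquivCoinduced : ExtendedTensor ι N ≃ₗ[A] CoinducedModule ι N :=
  LinearEquiv.ofLinearMap (ExtendedTensor.lift F.toCoinduced) (F.coinducedLift ExtendedTensor.mk)
    (F.coinduced_hom_ext fun m => by
      rw [LinearMap.comp_apply, coinducedLift_toCoinduced, ExtendedTensor.lift_mk,
        LinearMap.id_apply])
    (ExtendedTensor.hom_ext fun m => by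
      rw [LinearMap.comp_apply, ExtendedTensor.lift_mk, coinducedLift_toCoinduced,
        LinearMap.id_apply])

/-- For a Frobenius extension, coextension of scalars is also left adjoint to restriction. -/
noncomputable def coextendRestrictScalarsAdj :
    ModuleCat.coextendScalars.{u, u, u} ι ⊣ ModuleCat.restrictScalars.{u} ι :=
  Adjunction.mkOfHomEquiv
    { homEquiv N X := (ModuleCat.homEquiv (M := .of A (CoinducedModule ι N))).trans
        (F.coinducedLiftEquiv.trans (ModuleCat.semilinearMapAddEquiv ι N X).toEquiv)
      homEquiv_naturality_left_symm _ _ := rfl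
      homEquiv_naturality_right _ _ := rfl }

end FrobeniusSystem

theorem stmt4_general (F : FrobeniusSystem ι)
    (M : Type u) [AddCommGroup M] [Module A M] :
    (IsGorensteinInjective A (ModuleCat.of A M) ↔
      IsGorensteinInjective R (@ModuleCat.of R _ M _ (Module.compHom M ι))) ∧
    (IsGorensteinInjective R (@ModuleCat.of R _ M _ (Module.compHom M ι)) ↔
      (IsGorensteinInjective A
          (ModuleCat.of A (@ExtendedTensor R A _ _ ι M _ (Module.compHom M ι))) ∧
        IsGorensteinInjective A
          (ModuleCat.of A (@CoinducedModule R A _ _ ι M _ (Module.compHom M ι))))) := by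
  let _ : Module R M := Module.compHom M ι
  let adj₁ := ModuleCat.restrictCoextendScalarsAdj.{u, u, u} ι
  let adj₂ := F.coextendRestrictScalarsAdj
  let Y : ModuleCat.{u} A := .of A M
  have tensor_iff :
      gorensteinInjectives.{u} _ (ModuleCat.of A (ExtendedTensor ι M)) ↔
        gorensteinInjectives.{u} _ (ModuleCat.of A (CoinducedModule ι M)) :=
    (gorensteinInjectives.{u} _).prop_iff_of_iso (F.extendedTensorEquivCoinduced M).toModuleIso
  simp only [isGorensteinInjective_iff]
  rw [tensor_iff, and_self_iff]
  exact ⟨⟨gorensteinInjectives_obj_of_adjunctions adj₁ adj₂ (Y := Y),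
    gorensteinInjectives_of_obj adj₁ adj₂ (Y := Y)⟩,
    (gorensteinInjectives_obj_obj_iff adj₁ adj₂ (Y := Y)).symm⟩

end FrobeniusExtensions

section Statement

variable {R A : Type u} [Ring R] [Ring A]

theorem stmt4 (ι : R →+* A) (hF : IsFrobeniusExtension ι)
    (M : Type u) [AddCommGroup M] [Module A M] :
    (IsGorensteinInjective A (ModuleCat.of A M) ↔
      IsGorensteinInjective R (@ModuleCat.of R _ M _ (Module.compHom M ι))) ∧
    (IsGorensteinInjective R (@ModuleCat.of R _ M _ (Module.compHom M ι)) ↔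
      (IsGorensteinInjective A
          (ModuleCat.of A (@ExtendedTensor R A _ _ ι M _ (Module.compHom M ι))) ∧
        IsGorensteinInjective A
          (ModuleCat.of A (@CoinducedModule R A _ _ ι M _ (Module.compHom M ι))))) := by
  obtain ⟨-, τ, n, x, y, map_mul_left, map_mul_right, sum_x_mul, sum_mul_y⟩ := hF
  exact stmt4_general ⟨τ, n, x, y, map_mul_left, map_mul_right, sum_x_mul, sum_mul_y⟩ M

end Statement
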